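/- Let d ≥ 2, let p ∈ ℝ^d have pairwise distinct coordinates, let L be a nonempty proper subset of [d], and let J be a nonempty subset of [d]. Let H_{L,p}^+ = {x ∈ ℝ^d : min_{i∈L}(x_i − p_i) < min_{k∉L}(x_k − p_k)} be the open tropical halfspace determined by L with apex p. Then H_{L,p}^+ approximates T_J if and only if there exists i ∈ L ∩ J with J ⊆ {i} ∪ {q ∈ [d] : p_q < p_i}; that is, the types approximated by H_{L,p}^+ are exactly the union over i ∈ L of the types approximated by the open sectors H_{i,p}^+. -/

import Mathlib

open EMetric

/-- `m(x) = min_l x_l`, the minimum coordinate of `x`. -/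
noncomputable def minCoord {d : ℕ} (x : EuclideanSpace ℝ (Fin d)) : ℝ :=
  sInf (Set.range fun l => x l)

/-- `T_J`: the set of points of type `J` with respect to the tropical (min-plus)
hyperplane with apex `0`. -/
noncomputable def tropType {d : ℕ} (J : Finset (Fin d)) :
    Set (EuclideanSpace ℝ (Fin d)) :=
  {x | {k | x k = minCoord x} = (J : Set (Fin d))}

/-- The open tropical halfspace `H_{L,p}^+ = {x : min_{i∈L}(x_i−p_i) < min_{k∉L}(x_k−p_k)}`. -/
noncomputable def openHalfspace {d : ℕ} (L : Finset (Fin d))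
    (p : EuclideanSpace ℝ (Fin d)) : Set (EuclideanSpace ℝ (Fin d)) :=
  {x | sInf ((fun l => x l - p l) '' (L : Set (Fin d))) <
       sInf ((fun l => x l - p l) '' ((L : Set (Fin d))ᶜ))}

/-- `A` approximates `K`: there is `ε > 0` such that every point of `K` at
(Euclidean) distance at least `ε` from the relative boundary `cl K \ K` of `K`
belongs to `A` (with the distance to the empty set taken to be `+∞`). -/
def Approximates {d : ℕ} (A K : Set (EuclideanSpace ℝ (Fin d))) : Prop :=
  ∃ ε > (0 : ℝ), ∀ x ∈ K, ENNReal.ofReal ε ≤ infEdist x (closure K \ K) → x ∈ A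

/-!
On `T_J` all coordinates indexed by `J` share the minimal value `x j`, and the distance of `x` to
the relative boundary is, up to a factor `2`, the smallest gap `x k - x j` over `k ∉ J`. Hence `A`
approximates `T_J` iff it contains every point of `T_J` whose gaps are all at least some `R`.
For gaps exceeding `2‖p‖`, the coordinates outside `J` no longer influence on which side of the
hyperplane with apex `p` the point lies, which leaves a comparison of `max_{J ∩ L} p` with
`max_{J \ L} p`.
-/

theorem abs_apply_sub_apply_le_two_mul_norm {ι : Type*} [Fintype ι] (x : EuclideanSpace ℝ ι)
    (i j : ι) : |x i - x j| ≤ 2 * ‖x‖ :=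
  calc |x i - x j| ≤ |x i| + |x j| := abs_sub _ _
    _ ≤ ‖x‖ + ‖x‖ := add_le_add (PiLp.norm_apply_le x i) (PiLp.norm_apply_le x j)
    _ = 2 * ‖x‖ := (two_mul _).symm

theorem exists_forall_ne_lt_iff_exists_forall_notMem_lt {ι α : Type*} [LinearOrder α] {p : ι → α}
    {J : Finset ι} (hp : Set.InjOn p J) (L : Finset ι) :
    (∃ i ∈ L, i ∈ J ∧ ∀ q ∈ J, q ≠ i → p q < p i) ↔
      ∃ i ∈ L, i ∈ J ∧ ∀ q ∈ J, q ∉ L → p q < p i := by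
  constructor
  · rintro ⟨i, hiL, hiJ, hlt⟩
    exact ⟨i, hiL, hiJ, fun q hqJ hqL => hlt q hqJ (ne_of_mem_of_not_mem hiL hqL).symm⟩
  · rintro ⟨i, -, hiJ, hlt⟩
    obtain ⟨m, hmJ, hmax⟩ := J.exists_max_image p ⟨i, hiJ⟩
    have hmL : m ∈ L := by
      by_contra hmL
      exact (hlt m hmJ hmL).not_ge (hmax i hiJ)
    exact ⟨m, hmL, hmJ, fun q hqJ hqm => (hmax q hqJ).lt_of_ne (hp.ne hqJ hmJ hqm)⟩

section

variable {d : ℕ} {J L : Finset (Fin d)} {j k : Fin d} {p x y : EuclideanSpace ℝ (Fin d)}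

theorem minCoord_le (x : EuclideanSpace ℝ (Fin d)) (k : Fin d) : minCoord x ≤ x k :=
  csInf_le (Set.finite_range _).bddBelow ⟨k, rfl⟩

theorem minCoord_eq_apply (hmin : ∀ k, x j ≤ x k) : minCoord x = x j :=
  (minCoord_le x j).antisymm (le_csInf ⟨_, j, rfl⟩ (Set.forall_mem_range.2 hmin))

theorem mem_tropType_iff (hj : j ∈ J) :
    x ∈ tropType J ↔ (∀ k ∈ J, x k = x j) ∧ ∀ k ∉ J, x j < x k := by
  constructor
  · intro hx
    have apply_eq_iff (k : Fin d) : x k = minCoord x ↔ k ∈ J := Set.ext_iff.1 hx k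
    rw [(apply_eq_iff j).2 hj]
    exact ⟨fun k hk => (apply_eq_iff k).2 hk,
      fun k hk => (minCoord_le x k).lt_of_ne' (mt (apply_eq_iff k).1 hk)⟩
  · rintro ⟨heq, hlt⟩
    have hmin : minCoord x = x j := minCoord_eq_apply fun k => by
      by_cases hk : k ∈ J
      · exact (heq k hk).ge
      · exact (hlt k hk).le
    refine Set.ext fun k => ?_
    rw [Set.mem_ofPred_eq, hmin]
    exact ⟨fun hkj => by_contra fun hk => (hlt k hk).ne' hkj, heq k⟩

theorem sub_pos_of_mem_tropType (hj : j ∈ J) (hk : k ∉ J) (hx : x ∈ tropType J) :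
    0 < x k - x j :=
  sub_pos.2 (((mem_tropType_iff hj).1 hx).2 k hk)

theorem closure_tropType_subset (hj : j ∈ J) :
    closure (tropType J) ⊆ {x | (∀ k ∈ J, x k = x j) ∧ ∀ k ∉ J, x j ≤ x k} := by
  refine closure_minimal (fun x hx => ?_) ?_
  · obtain ⟨heq, hlt⟩ := (mem_tropType_iff hj).1 hx
    exact ⟨heq, fun k hk => (hlt k hk).le⟩
  · simp only [Set.ofPred_and, Set.ofPred_forall]
    exact (isClosed_biInter fun k _ => isClosed_eq (by fun_prop) (by fun_prop)).inter
      (isClosed_iInter fun k => isClosed_iInter fun _ => isClosed_le (by fun_prop) (by fun_prop))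

theorem exists_notMem_apply_eq_of_mem_closure_tropType_diff (hj : j ∈ J)
    (hy : y ∈ closure (tropType J) \ tropType J) : ∃ k ∉ J, y k = y j := by
  obtain ⟨heq, hle⟩ := closure_tropType_subset hj hy.1
  by_contra! hne
  exact hy.2 ((mem_tropType_iff hj).2 ⟨heq, fun k hk => (hle k hk).lt_of_ne' (hne k hk)⟩)

theorem sub_single_mem_tropType (hj : j ∈ J) (hk : k ∉ J) (hx : x ∈ tropType J) {t : ℝ}
    (ht : t < x k - x j) : x - EuclideanSpace.single k t ∈ tropType J := by
  obtain ⟨heq, hlt⟩ := (mem_tropType_iff hj).1 hx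
  have apply_of_mem {l : Fin d} (hl : l ∈ J) : (x - EuclideanSpace.single k t) l = x j := by
    simp [ne_of_mem_of_not_mem hl hk, heq l hl]
  rw [mem_tropType_iff hj, apply_of_mem hj]
  refine ⟨fun l hl => apply_of_mem hl, fun l hl => ?_⟩
  obtain rfl | hlk := eq_or_ne l k
  · simpa using lt_sub_comm.1 ht
  · simpa [hlk] using hlt l hl

theorem sub_single_mem_closure_tropType_diff (hj : j ∈ J) (hk : k ∉ J) (hx : x ∈ tropType J) :
    x - EuclideanSpace.single k (x k - x j) ∈ closure (tropType J) \ tropType J := by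
  constructor
  · have hcont : Continuous fun t : ℝ => x - EuclideanSpace.single k t :=
      continuous_const.sub (Isometry.of_dist_eq (PiLp.dist_single_same 2 (fun _ => ℝ) k)).continuous
    have hmem : x k - x j ∈ closure (Set.Iio (x k - x j)) := by
      rw [closure_Iio]
      exact Set.self_mem_Iic
    have hmaps : Set.MapsTo (fun t : ℝ => x - EuclideanSpace.single k t) (Set.Iio (x k - x j))
        (tropType J) := fun _ ht => sub_single_mem_tropType hj hk hx ht
    exact hmaps.closure hcont hmem
  · intro hmem
    have hlt := ((mem_tropType_iff hj).1 hmem).2 k hk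
    simp [ne_of_mem_of_not_mem hj hk] at hlt

theorem infEDist_closure_tropType_diff_le (hj : j ∈ J) (hk : k ∉ J) (hx : x ∈ tropType J) :
    Metric.infEDist x (closure (tropType J) \ tropType J) ≤ ENNReal.ofReal (x k - x j) := by
  have hmem := sub_single_mem_closure_tropType_diff hj hk hx
  refine (Metric.infEDist_le_edist_of_mem hmem).trans_eq ?_
  rw [edist_dist, dist_eq_norm, sub_sub_cancel, PiLp.norm_single,
    Real.norm_of_nonneg (sub_pos_of_mem_tropType hj hk hx).le]

theorem ofReal_le_infEDist_closure_tropType_diff (hj : j ∈ J) {ε : ℝ}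
    (hgap : ∀ k ∉ J, 2 * ε ≤ x k - x j) :
    ENNReal.ofReal ε ≤ Metric.infEDist x (closure (tropType J) \ tropType J) := by
  refine Metric.le_infEDist.2 fun y hy => ?_
  obtain ⟨k, hk, hky⟩ := exists_notMem_apply_eq_of_mem_closure_tropType_diff hj hy
  rw [edist_dist, dist_eq_norm]
  refine ENNReal.ofReal_le_ofReal (le_of_mul_le_mul_left ?_ (zero_lt_two' ℝ))
  calc 2 * ε ≤ x k - x j := hgap k hk
    _ = (x - y) k - (x - y) j := by
      rw [PiLp.sub_apply, PiLp.sub_apply, hky, sub_sub_sub_cancel_right]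
    _ ≤ 2 * ‖x - y‖ := (le_abs_self _).trans (abs_apply_sub_apply_le_two_mul_norm _ _ _)

theorem approximates_tropType_iff {A : Set (EuclideanSpace ℝ (Fin d))} (hj : j ∈ J) :
    Approximates A (tropType J) ↔
      ∃ R > 0, ∀ x ∈ tropType J, (∀ k ∉ J, R ≤ x k - x j) → x ∈ A := by
  constructor
  · rintro ⟨ε, hε, hA⟩
    exact ⟨2 * ε, by positivity,
      fun x hx hgap => hA x hx (ofReal_le_infEDist_closure_tropType_diff hj hgap)⟩
  · rintro ⟨R, hR, hA⟩
    refine ⟨R, hR, fun x hx hdist => hA x hx fun k hk => ?_⟩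
    exact (ENNReal.ofReal_le_ofReal_iff (sub_pos_of_mem_tropType hj hk hx).le).1
      (hdist.trans (infEDist_closure_tropType_diff_le hj hk hx))

theorem mem_openHalfspace_iff (hL : L.Nonempty) (hL' : L ≠ Finset.univ) :
    x ∈ openHalfspace L p ↔ ∃ l ∈ L, ∀ k ∉ L, x l - p l < x k - p k := by
  have hcompl : ((L : Set (Fin d))ᶜ).Nonempty := by
    rwa [Set.nonempty_compl, Ne, Finset.coe_eq_univ]
  rw [openHalfspace, Set.mem_ofPred_eq,
    csInf_lt_iff (Set.toFinite _).bddBelow (hL.to_set.image _), Set.exists_mem_image]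
  simp only [(Set.toFinite _).lt_csInf_iff (hcompl.image _), Set.forall_mem_image,
    Set.mem_compl_iff, Finset.mem_coe]

theorem exists_forall_notMem_lt_of_approximates (hL : L.Nonempty) (hL' : L ≠ Finset.univ)
    (hj : j ∈ J) (happrox : Approximates (openHalfspace L p) (tropType J)) :
    ∃ i ∈ L, i ∈ J ∧ ∀ q ∈ J, q ∉ L → p q < p i := by
  obtain ⟨R, hR, hA⟩ := (approximates_tropType_iff hj).1 happrox
  let x : EuclideanSpace ℝ (Fin d) :=
    WithLp.toLp 2 fun k => if k ∈ J then 0 else R + 2 * ‖p‖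
  have x_of_mem {k : Fin d} (hk : k ∈ J) : x k = 0 := if_pos hk
  have x_of_notMem {k : Fin d} (hk : k ∉ J) : x k = R + 2 * ‖p‖ := if_neg hk
  have hgap (k : Fin d) (hk : k ∉ J) : R ≤ x k - x j := by
    rw [x_of_mem hj, x_of_notMem hk]
    linarith [norm_nonneg p]
  have hx : x ∈ tropType J := (mem_tropType_iff hj).2
    ⟨fun k hk => (x_of_mem hk).trans (x_of_mem hj).symm,
      fun k hk => sub_pos.1 (hR.trans_le (hgap k hk))⟩
  obtain ⟨l, hlL, hlt⟩ := (mem_openHalfspace_iff hL hL').1 (hA x hx hgap)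
  by_cases hlJ : l ∈ J
  · refine ⟨l, hlL, hlJ, fun q hqJ hqL => ?_⟩
    simpa [x_of_mem hlJ, x_of_mem hqJ] using hlt q hqL
  · have J_subset_L (q : Fin d) (hqJ : q ∈ J) : q ∈ L := by
      by_contra hqL
      have hlq := hlt q hqL
      rw [x_of_mem hqJ, x_of_notMem hlJ] at hlq
      linarith [(le_abs_self _).trans (abs_apply_sub_apply_le_two_mul_norm p l q)]
    exact ⟨j, J_subset_L j hj, hj, fun q hqJ hqL => absurd (J_subset_L q hqJ) hqL⟩

theorem approximates_of_forall_notMem_lt (hL' : L ≠ Finset.univ) {i : Fin d} (hiL : i ∈ L)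
    (hiJ : i ∈ J) (hlt : ∀ q ∈ J, q ∉ L → p q < p i) :
    Approximates (openHalfspace L p) (tropType J) := by
  refine (approximates_tropType_iff hiJ).2 ⟨2 * ‖p‖ + 1, by positivity, fun x hx hgap => ?_⟩
  refine (mem_openHalfspace_iff ⟨i, hiL⟩ hL').2 ⟨i, hiL, fun k hkL => ?_⟩
  by_cases hkJ : k ∈ J
  · rw [((mem_tropType_iff hiJ).1 hx).1 k hkJ]
    exact sub_lt_sub_left (hlt k hkJ hkL) _
  · have hpk : p k - p i ≤ 2 * ‖p‖ :=
      (le_abs_self _).trans (abs_apply_sub_apply_le_two_mul_norm p k i)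
    linarith [hgap k hkJ]

end

theorem stmt_9_general {d : ℕ} (p : EuclideanSpace ℝ (Fin d))
    (L : Finset (Fin d)) (hL : L.Nonempty) (hL' : L ≠ Finset.univ)
    (J : Finset (Fin d)) (hJ : J.Nonempty) :
    Approximates (openHalfspace L p) (tropType J) ↔
      ∃ i ∈ L, i ∈ J ∧ ∀ q ∈ J, q ∉ L → p q < p i := by
  obtain ⟨j, hj⟩ := hJ
  exact ⟨exists_forall_notMem_lt_of_approximates hL hL' hj,
    fun ⟨_, hiL, hiJ, hlt⟩ => approximates_of_forall_notMem_lt hL' hiL hiJ hlt⟩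

theorem stmt_9 {d : ℕ} (hd : 2 ≤ d) (p : EuclideanSpace ℝ (Fin d))
    (hp : Function.Injective fun l => p l)
    (L : Finset (Fin d)) (hL : L.Nonempty) (hL' : L ≠ Finset.univ)
    (J : Finset (Fin d)) (hJ : J.Nonempty) :
    Approximates (openHalfspace L p) (tropType J) ↔
      ∃ i ∈ L, i ∈ J ∧ ∀ q ∈ J, q ≠ i → p q < p i :=
  (stmt_9_general p L hL hL' J hJ).trans
    (exists_forall_ne_lt_iff_exists_forall_notMem_lt hp.injOn L).symm
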